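/- arXiv:1609.07613 — 2 statements merged into one kernel-verified Lean document; each statement's English description precedes it below -/
import Mathlib

section
/- Let k be a field and Λ a finite-dimensional k-algebra. Let K = Hom_k(Λ, k), regarded as a right Λ-module via (f · b)(c) = f(bc) and as a left Λ-module via (a · f)(c) = f(ca). Then K is projective as a right Λ-module if and only if K is projective as a left Λ-module. -/
section

variable (k : Type*) [Field k] (Λ : Type*) [Ring Λ] [Algebra k Λ]

/-- The right `Λ`-module structure on `K = Hom_k(Λ, k)` given by `(f · b)(c) = f (b * c)`,
encoded as a module structure over the opposite ring `Λᵐᵒᵖ`. -/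
noncomputable instance rightDualSMul : SMul Λᵐᵒᵖ (Λ →ₗ[k] k) :=
  ⟨fun b f => f.comp (LinearMap.mulLeft k b.unop)⟩

theorem rightDual_smul_apply (b : Λᵐᵒᵖ) (f : Λ →ₗ[k] k) (c : Λ) :
    (b • f) c = f (b.unop * c) := rfl

noncomputable instance rightDualModule : Module Λᵐᵒᵖ (Λ →ₗ[k] k) where
  one_smul f := LinearMap.ext fun c => by simp [rightDual_smul_apply]
  mul_smul a b f := LinearMap.ext fun c => by
    simp [rightDual_smul_apply, mul_assoc]
  smul_zero a := LinearMap.ext fun c => rfl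
  smul_add a f g := LinearMap.ext fun c => rfl
  add_smul a b f := LinearMap.ext fun c => by
    simp [rightDual_smul_apply, add_mul]
  zero_smul f := LinearMap.ext fun c => by
    simp [rightDual_smul_apply]

/-- The left `Λ`-module structure on `K = Hom_k(Λ, k)` given by `(a · f)(c) = f (c * a)`. -/
noncomputable instance leftDualSMul : SMul Λ (Λ →ₗ[k] k) :=
  ⟨fun a f => f.comp (LinearMap.mulRight k a)⟩

theorem leftDual_smul_apply (a : Λ) (f : Λ →ₗ[k] k) (c : Λ) :
    (a • f) c = f (c * a) := rfl

noncomputable instance leftDualModule : Module Λ (Λ →ₗ[k] k) where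
  one_smul f := LinearMap.ext fun c => by simp [leftDual_smul_apply]
  mul_smul a b f := LinearMap.ext fun c => by
    simp [leftDual_smul_apply, mul_assoc]
  smul_zero a := LinearMap.ext fun c => rfl
  smul_add a f g := LinearMap.ext fun c => rfl
  add_smul a b f := LinearMap.ext fun c => by
    simp [leftDual_smul_apply, mul_add]
  zero_smul f := LinearMap.ext fun c => by
    simp [leftDual_smul_apply]

/-!
On either side, the endomorphism ring of `K` is `Λ` acting from the other side, because `Λ` is its
own double dual. For a finite projective `R`-module `M` with endomorphism ring `E`, the map
`J ↦ M* J M` embeds the two-sided ideals of `E` into those of `R` and takes `E` to the trace ideal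
of `M`. If `R` is Artinian and `E ≅ Rᵐᵒᵖ`, this yields a strictly monotone self-map of the two-sided
ideals of `R`. If it moved `R`, its iterates on `R` would descend forever, so the trace ideal is
`R`. An expression `∑ hᵢ(xᵢ) = 1` with `hᵢ ∈ M*` then makes `y ↦ (hᵢ(·) y)ᵢ` an `E`-linear
splitting of `Eⁿ → M`, `t ↦ ∑ tᵢ(xᵢ)`, and `M` is projective over `E`.
-/

theorem not_apply_lt_of_strictMono {α : Type*} [Preorder α] [WellFoundedLT α] {f : α → α}
    (hf : StrictMono f) (a : α) : ¬ f a < a :=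
  fun ha => not_strictAnti_of_wellFoundedLT _ (hf.strictAnti_iterate_of_map_lt ha)

section EndomorphismRing

open TwoSidedIdeal

variable {R M : Type*} [Ring R] [AddCommGroup M] [Module R M]

/-- The two-sided ideal `M* J M` of `R` generated by the values `h (u x)`, for `u` in a two-sided
ideal `J` of `End_R(M)`, `h : M → R` linear and `x ∈ M`. For `J = ⊤` it is the trace ideal of `M`,
which is all of `R` exactly when `M` is a generator. -/
def valueIdeal (J : TwoSidedIdeal (Module.End R M)) : TwoSidedIdeal R :=
  span {a | ∃ u ∈ J, ∃ (h : M →ₗ[R] R) (x : M), h (u x) = a}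

theorem apply_mem_valueIdeal {J : TwoSidedIdeal (Module.End R M)} {u : Module.End R M}
    (hu : u ∈ J) (h : M →ₗ[R] R) (x : M) : h (u x) ∈ valueIdeal J :=
  subset_span ⟨u, hu, h, x, rfl⟩

theorem valueIdeal_mono : Monotone (valueIdeal (R := R) (M := M)) :=
  fun _ _ hIJ => span_mono fun _ ⟨u, hu, hx⟩ => ⟨u, hIJ hu, hx⟩

/-- In Morita notation, where `M M* ⊆ End_R(M)`, this says `M (M* J M) M* ⊆ J`. -/
theorem smulRight_smul_mem_of_mem_valueIdeal {J : TwoSidedIdeal (Module.End R M)} {a : R}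
    (ha : a ∈ valueIdeal J) (h : M →ₗ[R] R) (x : M) : h.smulRight (a • x) ∈ J := by
  induction ha using span_induction generalizing h x with
  | mem a ha =>
    obtain ⟨u, hu, g, y, rfl⟩ := ha
    have hfactor : h.smulRight (g (u y) • x) = g.smulRight x * u * h.smulRight y := by
      ext z; simp
    rw [hfactor]
    exact J.mul_mem_right _ _ (J.mul_mem_left _ _ hu)
  | zero =>
    have hzero : h.smulRight ((0 : R) • x) = 0 := by ext z; simp
    exact hzero ▸ J.zero_mem
  | add a b _ _ ha hb =>
    have hadd : h.smulRight ((a + b) • x) = h.smulRight (a • x) + h.smulRight (b • x) := by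
      ext z; simp [add_smul]
    exact hadd ▸ J.add_mem (ha h x) (hb h x)
  | neg a _ ha =>
    have hneg : h.smulRight (-a • x) = -h.smulRight (a • x) := by ext z; simp
    exact hneg ▸ J.neg_mem (ha h x)
  | left_absorb r a _ ha =>
    have hleft : h.smulRight ((r * a) • x) = (h.smulRight r).smulRight (a • x) := by
      ext z; simp [mul_smul]
    exact hleft ▸ ha (h.smulRight r) x
  | right_absorb r a _ ha =>
    exact mul_smul a r x ▸ ha h (r • x)

variable (R M) in
theorem exists_sum_smulRight_eq_one [Module.Finite R M] [Module.Projective R M] :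
    ∃ (n : ℕ) (h : Fin n → M →ₗ[R] R) (x : Fin n → M),
      ∑ i, (h i).smulRight (x i) = (1 : Module.End R M) := by
  obtain ⟨n, p, s, -, -, hps⟩ := Module.Finite.exists_comp_eq_id_of_projective R M
  refine ⟨n, fun i => LinearMap.proj i ∘ₗ s, fun i => p (Pi.single i 1), ?_⟩
  calc ∑ i, (LinearMap.proj i ∘ₗ s).smulRight (p (Pi.single i 1)) = p ∘ₗ s := by
        ext y
        simp [← map_smul, ← map_sum, ← Pi.single_smul, Finset.univ_sum_single]
    _ = 1 := hps

theorem valueIdeal_le_valueIdeal_iff [Module.Finite R M] [Module.Projective R M]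
    {I J : TwoSidedIdeal (Module.End R M)} : valueIdeal I ≤ valueIdeal J ↔ I ≤ J := by
  refine ⟨fun hIJ u hu => ?_, fun hIJ => valueIdeal_mono hIJ⟩
  obtain ⟨n, h, x, hx⟩ := exists_sum_smulRight_eq_one R M
  have hu_eq : u = ∑ i, ∑ j, (h i).smulRight (h j (u (x i)) • x j) := by
    calc u = (∑ j, (h j).smulRight (x j)) * u * ∑ i, (h i).smulRight (x i) := by
          rw [hx, one_mul, mul_one]
      _ = ∑ i, ∑ j, (h i).smulRight (h j (u (x i)) • x j) := by
          ext y; simp [Finset.smul_sum]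
  rw [hu_eq]
  exact sum_mem fun i _ => sum_mem fun j _ =>
    smulRight_smul_mem_of_mem_valueIdeal (hIJ (apply_mem_valueIdeal hu (h j) (x i))) (h i) (x j)

instance wellFoundedLT_twoSidedIdeal [IsArtinianRing R] : WellFoundedLT (TwoSidedIdeal R) :=
  orderIsoIsTwoSided.toOrderEmbedding.wellFoundedLT

theorem valueIdeal_top_eq_top [WellFoundedLT (TwoSidedIdeal R)] [Module.Finite R M]
    [Module.Projective R M] (e : TwoSidedIdeal R ↪o TwoSidedIdeal (Module.End R M)) :
    valueIdeal (⊤ : TwoSidedIdeal (Module.End R M)) = ⊤ := by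
  have hmono : StrictMono fun I => valueIdeal (e I) :=
    (OrderEmbedding.ofMapLEIff valueIdeal fun _ _ => valueIdeal_le_valueIdeal_iff).strictMono.comp
      e.strictMono
  by_contra hne
  have hlt : valueIdeal (e ⊤) < ⊤ :=
    (valueIdeal_mono le_top).trans_lt (lt_top_iff_ne_top.2 hne)
  exact not_apply_lt_of_strictMono hmono ⊤ hlt

theorem exists_sum_apply_eq_one
    (hM : valueIdeal (⊤ : TwoSidedIdeal (Module.End R M)) = ⊤) :
    ∃ (n : ℕ) (h : Fin n → M →ₗ[R] R) (x : Fin n → M), ∑ i, h i (x i) = 1 := by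
  have hone : (1 : R) ∈ valueIdeal (⊤ : TwoSidedIdeal (Module.End R M)) := hM ▸ mem_top R
  rw [valueIdeal, mem_span_iff_mem_addSubgroup_closure_absorbing,
    ← Submodule.span_int_eq_addSubgroupClosure, Submodule.mem_toAddSubgroup,
    Submodule.mem_span_set'] at hone
  · obtain ⟨n, c, a, hca⟩ := hone
    choose u _ h x hx using fun i => (a i).2
    exact ⟨n, h, fun i => c i • u i (x i), by simpa only [map_zsmul, hx] using hca⟩
  · rintro r _ ⟨u, hu, h, x, rfl⟩
    exact ⟨u, hu, h, r • x, by simp⟩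
  · rintro _ r ⟨u, hu, h, x, rfl⟩
    exact ⟨u, hu, h.smulRight r, x, by simp⟩

theorem projective_end_of_valueIdeal_eq_top
    (hM : valueIdeal (⊤ : TwoSidedIdeal (Module.End R M)) = ⊤) :
    Module.Projective (Module.End R M) M := by
  obtain ⟨n, h, x, hx⟩ := exists_sum_apply_eq_one hM
  let coeff : M →ₗ[Module.End R M] (Fin n → Module.End R M) :=
    { toFun := fun y j => (h j).smulRight y
      map_add' := fun y z => by ext; simp
      map_smul' := fun u y => by ext; simp }
  refine .of_split coeff (Fintype.linearCombination (Module.End R M) x) (LinearMap.ext fun y => ?_)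
  calc ∑ j, h j (x j) • y = (∑ j, h j (x j)) • y := Finset.sum_smul.symm
    _ = y := by rw [hx, one_smul]

theorem projective_of_bijective_toModuleEnd [IsArtinianRing R] [Module.Finite R M]
    [Module.Projective R M] {S : Type*} [Ring S] [Module S M] [SMulCommClass S R M]
    (hS : Function.Bijective (Module.toModuleEnd R (S := S) M)) (e : S ≃+* Rᵐᵒᵖ) :
    Module.Projective S M := by
  let σ : S ≃+* Module.End R M := .ofBijective _ hS
  have hM : valueIdeal (⊤ : TwoSidedIdeal (Module.End R M)) = ⊤ :=
    valueIdeal_top_eq_top (opOrderIso.trans (e.symm.trans σ).mapTwoSidedIdeal).toOrderEmbedding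
  have := projective_end_of_valueIdeal_eq_top hM
  have := RingHomInvPair.of_ringEquiv σ
  have := RingHomInvPair.of_ringEquiv_symm σ
  let toEnd : M ≃ₛₗ[(σ : S →+* Module.End R M)] M :=
    { AddEquiv.refl M with map_smul' := fun _ _ => rfl }
  exact .of_equiv toEnd.symm

end EndomorphismRing

section Dual

instance smulCommClass_rightDual_leftDual : SMulCommClass Λᵐᵒᵖ Λ (Λ →ₗ[k] k) where
  smul_comm b a f := LinearMap.ext fun c => congrArg f (mul_assoc b.unop c a)

instance smulCommClass_leftDual_rightDual : SMulCommClass Λ Λᵐᵒᵖ (Λ →ₗ[k] k) :=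
  .symm _ _ _

instance isScalarTower_leftDual : IsScalarTower k Λ (Λ →ₗ[k] k) where
  smul_assoc r a f := LinearMap.ext fun c => by simp [leftDual_smul_apply]

instance isScalarTower_rightDual : IsScalarTower k Λᵐᵒᵖ (Λ →ₗ[k] k) where
  smul_assoc r b f := LinearMap.ext fun c => by simp [rightDual_smul_apply]

variable [FiniteDimensional k Λ]

theorem bijective_toModuleEnd_rightDual :
    Function.Bijective (Module.toModuleEnd Λ (S := Λᵐᵒᵖ) (Λ →ₗ[k] k)) := by
  constructor
  · intro b c hbc
    refine MulOpposite.unop_injective (Module.eval_apply_injective k (LinearMap.ext fun f => ?_))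
    simpa [rightDual_smul_apply] using LinearMap.congr_fun (LinearMap.congr_fun hbc f) 1
  · intro u
    obtain ⟨b, hb⟩ := (Module.bijective_dual_eval k Λ).2
      (LinearMap.applyₗ (1 : Λ) ∘ₗ u.restrictScalars k)
    refine ⟨.op b, LinearMap.ext fun f => LinearMap.ext fun c => ?_⟩
    calc f (b * c) = (c • f) b := rfl
      _ = u (c • f) 1 := LinearMap.congr_fun hb (c • f)
      _ = (c • u f) 1 := by rw [map_smul]
      _ = u f c := by rw [leftDual_smul_apply, one_mul]

theorem bijective_toModuleEnd_leftDual :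
    Function.Bijective (Module.toModuleEnd Λᵐᵒᵖ (S := Λ) (Λ →ₗ[k] k)) := by
  constructor
  · intro b c hbc
    refine Module.eval_apply_injective k (LinearMap.ext fun f => ?_)
    simpa [leftDual_smul_apply] using LinearMap.congr_fun (LinearMap.congr_fun hbc f) 1
  · intro u
    obtain ⟨b, hb⟩ := (Module.bijective_dual_eval k Λ).2
      (LinearMap.applyₗ (1 : Λ) ∘ₗ u.restrictScalars k)
    refine ⟨b, LinearMap.ext fun f => LinearMap.ext fun c => ?_⟩
    calc f (c * b) = (MulOpposite.op c • f) b := rfl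
      _ = u (MulOpposite.op c • f) 1 := LinearMap.congr_fun hb (MulOpposite.op c • f)
      _ = (MulOpposite.op c • u f) 1 := by rw [map_smul]
      _ = u f c := by rw [rightDual_smul_apply, MulOpposite.unop_op, mul_one]

end Dual

/-- For a finite-dimensional algebra `Λ` over a field `k`, the dual `K = Hom_k(Λ, k)` is
projective as a right `Λ`-module if and only if it is projective as a left `Λ`-module. -/
theorem stmt2 [FiniteDimensional k Λ] :
    Module.Projective Λᵐᵒᵖ (Λ →ₗ[k] k) ↔ Module.Projective Λ (Λ →ₗ[k] k) := by
  have : Module.Finite Λ (Λ →ₗ[k] k) := .of_restrictScalars_finite k Λ _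
  have : Module.Finite Λᵐᵒᵖ (Λ →ₗ[k] k) := .of_restrictScalars_finite k Λᵐᵒᵖ _
  have : IsArtinianRing Λ := .of_finite k Λ
  have : IsArtinianRing Λᵐᵒᵖ := .of_finite k Λᵐᵒᵖ
  exact ⟨
    fun _ => projective_of_bijective_toModuleEnd (bijective_toModuleEnd_leftDual k Λ) (.opOp Λ),
    fun _ => projective_of_bijective_toModuleEnd (bijective_toModuleEnd_rightDual k Λ) (.refl _)⟩

end
end

section
/- Let (R, m) be a regular Noetherian local ring of Krull dimension d, and let M be a nonzero finitely generated R-module of finite length. Then Ext^d_R(M, R) ≠ 0. -/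
open CategoryTheory

/-!
The maximal ideal of a regular local ring of dimension `d` is generated by a regular sequence of
length `d`: killing one of `d` generators lowers the dimension by exactly one, so by induction
every quotient by an initial segment of the generators is regular, hence a domain. A module of
finite length is supported at the closed point, so by Rees' theorem `Ext^i(M, R) = 0` for `i < d`.
If also `Ext^d(M, R) = 0`, the converse half of Rees' theorem gives an `R`-regular sequence of
length `d + 1`, which is longer than the dimension allows.
-/

universe u v w

section Ext

variable {A : Type*} [Ring A] {C : Type u} [Category.{v} C] [Abelian C] [Linear A C]
  [EnoughProjectives C]

/- Mathlib's `Ext` is a derived functor while Rees' theorem is about `Abelian.Ext`, defined through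
the derived category; a projective resolution computes both. -/
lemma subsingleton_abelianExt_of_isZero_ext [HasExt.{w} C] (X Y : C) (n : ℕ)
    (h : Limits.IsZero (((Ext A C n).obj (Opposite.op X)).obj Y)) :
    Subsingleton (Abelian.Ext X Y n) := by
  let P := projectiveResolution X
  have hexact : (P.complex.linearYonedaObj A Y).ExactAt n := by
    rw [HomologicalComplex.exactAt_iff_isZero_homology]
    exact h.of_iso (P.isoExt n Y).symm
  refine subsingleton_of_forall_eq 0 fun α ↦ ?_
  obtain ⟨f, hf, rfl⟩ := P.extMk_surjective α (n + 1) rfl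
  cases n with
  | zero =>
    rw [HomologicalComplex.exactAt_iff' _ 0 0 1 (by simp) (by simp),
      ShortComplex.moduleCat_exact_iff] at hexact
    obtain ⟨g, hg⟩ := hexact f hf
    have hd : (P.complex.linearYonedaObj A Y).d 0 0 = 0 :=
      HomologicalComplex.shape _ _ _ (by simp)
    obtain rfl : f = 0 := hg.symm.trans (congrArg (fun φ ↦ φ.hom g) hd)
    exact P.extMk_zero 1 rfl
  | succ p =>
    rw [HomologicalComplex.exactAt_iff' _ p (p + 1) (p + 2) (by simp) (by simp),
      ShortComplex.moduleCat_exact_iff] at hexact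
    exact (P.extMk_eq_zero_iff f _ rfl hf p rfl).mpr (hexact f hf)

end Ext

section FiniteLength

variable {R : Type*} [CommRing R] {M : Type*} [AddCommGroup M] [Module R M]

lemma isMaximal_of_mem_support_of_isFiniteLength (hM : IsFiniteLength R M) {p : PrimeSpectrum R}
    (hp : p ∈ Module.support R M) : p.asIdeal.IsMaximal := by
  induction hM with
  | of_subsingleton => simp [Module.support_eq_empty] at hp
  | @of_simple_quotient M _ _ N _ _ ih =>
    rw [Module.support_of_exact (LinearMap.exact_subtype_mkQ N) N.injective_subtype
      N.mkQ_surjective] at hp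
    rcases hp with hp | hp
    · exact ih hp
    · have hmax : (Module.annihilator R (M ⧸ N)).IsMaximal := IsSimpleModule.annihilator_isMaximal
      exact hmax.eq_of_le p.2.ne_top (Module.annihilator_le_of_mem_support hp) ▸ hmax

lemma support_eq_zeroLocus_maximalIdeal_of_isFiniteLength [IsLocalRing R] [Nontrivial M]
    (hM : IsFiniteLength R M) :
    Module.support R M = PrimeSpectrum.zeroLocus (IsLocalRing.maximalIdeal R : Set R) := by
  rw [PrimeSpectrum.zeroLocus_eq_singleton]
  refine Set.eq_singleton_iff_unique_mem.mpr
    ⟨IsLocalRing.closedPoint_mem_support R M, fun p hp ↦ PrimeSpectrum.ext ?_⟩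
  exact IsLocalRing.eq_maximalIdeal (isMaximal_of_mem_support_of_isFiniteLength hM hp)

end FiniteLength

section RegularSequence

open RingTheory.Sequence Pointwise

lemma isRegular_cons_iff_quotient {R : Type*} [CommRing R] {x : R} {rs : List R} :
    IsRegular R (x :: rs) ↔ IsSMulRegular R x ∧
      IsRegular (R ⧸ Ideal.span {x}) (rs.map (Ideal.Quotient.mk (Ideal.span {x}))) := by
  have heq : x • (⊤ : Submodule R R) = Ideal.span {x} := by
    rw [← Submodule.ideal_span_singleton_smul, smul_eq_mul, Ideal.mul_top]
  rw [isRegular_cons_iff]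
  refine and_congr_right fun _ ↦ ((Submodule.quotEquivOfEq _ _ heq).toAddEquiv.isRegular_congr ?_)
  refine List.forall₂_map_right_iff.mpr (List.forall₂_same.mpr fun r _ y ↦ ?_)
  exact (Submodule.quotEquivOfEq _ _ heq).map_smul r y

lemma mem_maximalIdeal_of_isRegular {R : Type*} [CommRing R] [IsLocalRing R] {N : Type*}
    [AddCommGroup N] [Module R N] {rs : List R} (hrs : IsRegular N rs) {r : R} (hr : r ∈ rs) :
    r ∈ IsLocalRing.maximalIdeal R := by
  have hne : Ideal.ofList rs ≠ ⊤ := fun htop ↦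
    hrs.top_ne_smul (by rw [htop, Submodule.top_smul])
  exact IsLocalRing.le_maximalIdeal hne (Ideal.subset_span hr)

variable {R : Type u} [CommRing R] [IsNoetherianRing R]

lemma exists_isRegular_length_add_one_of_subsingleton_ext [Small.{v} R] {I : Ideal R}
    {M N : ModuleCat.{v} R} [Module.Finite R M] [Module.Finite R N]
    (hM : Module.support R M = PrimeSpectrum.zeroLocus I) (hN : I • (⊤ : Submodule R N) < ⊤)
    {rs : List R} (hmem : ∀ r ∈ rs, r ∈ I) (hrs : IsRegular N rs)
    (hext : Subsingleton (Abelian.Ext M N rs.length)) :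
    ∃ rs' : List R, rs'.length = rs.length + 1 ∧ IsRegular N rs' := by
  have hvanish : ∀ i < rs.length + 1, Subsingleton (Abelian.Ext M N i) := fun i hi ↦
    (Nat.lt_succ_iff_lt_or_eq.mp hi).elim
      (ModuleCat.subsingleton_ext_of_exists_isRegular I M hM.le N hN rs hmem hrs i) (· ▸ hext)
  obtain ⟨rs', hlength, -, hrs'⟩ :=
    ModuleCat.exists_isRegular_of_exists_subsingleton_ext I _ N hN M hM hvanish
  exact ⟨rs', hlength, hrs'⟩

lemma length_le_supportDim_of_isRegular [IsLocalRing R] {N : Type*} [AddCommGroup N] [Module R N]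
    [Module.Finite R N] {rs : List R} (hrs : IsRegular N rs) :
    (rs.length : WithBot ℕ∞) ≤ Module.supportDim R N := by
  have := hrs.quot_ofList_smul_nontrivial ⊤
  rw [← Module.supportDim_add_length_eq_supportDim_of_isRegular rs hrs]
  have := (Module.nonempty_support_of_nontrivial (R := R)
    (M := N ⧸ Ideal.ofList rs • (⊤ : Submodule R N))).to_subtype
  exact le_add_of_nonneg_left Order.krullDim_nonneg

end RegularSequence

section KrullDimension

lemma exists_isPrime_le_ringKrullDim_quotient {R : Type*} [CommRing R] {n : ℕ}
    (hn : n ≤ ringKrullDim R) : ∃ p : Ideal R, p.IsPrime ∧ n ≤ ringKrullDim (R ⧸ p) := by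
  obtain ⟨l, hl⟩ := Order.le_krullDim_iff.mp hn
  refine ⟨l.head.asIdeal, l.head.isPrime, ?_⟩
  rw [ringKrullDim_quotient, Order.le_krullDim_iff]
  exact ⟨⟨l.length, fun i ↦ ⟨l i, LTSeries.head_le l i⟩, fun i ↦ l.step i⟩, hl⟩

lemma injective_of_surjective_of_ringKrullDim_le {R S : Type*} [CommRing R] [IsDomain R]
    [CommRing S] {f : R →+* S} (hf : Function.Surjective f) {n : ℕ} (hR : ringKrullDim R ≤ n)
    (hS : n ≤ ringKrullDim S) : Function.Injective f := by
  refine (injective_iff_map_eq_zero f).mpr fun r hr ↦ by_contra fun hr0 ↦ ?_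
  have hlt : ringKrullDim S < n := ENat.WithBot.add_one_le_natCast_iff.mp <|
    (ringKrullDim_succ_le_of_surjective f hf (mem_nonZeroDivisors_of_ne_zero hr0) hr).trans hR
  exact hS.not_gt hlt

variable {R : Type*} [CommRing R]

lemma eq_bot_of_isPrime_of_le_span_singleton {x : R} (hx : x ∈ Ring.jacobson R) {p : Ideal R}
    [p.IsPrime] (hfg : p.FG) (hle : p ≤ Ideal.span {x}) (hxp : x ∉ p) : p = ⊥ := by
  refine Submodule.eq_bot_of_le_smul_of_le_jacobson_bot (Ideal.span {x}) p hfg (fun a ha ↦ ?_) ?_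
  · obtain ⟨b, rfl⟩ := Ideal.mem_span_singleton.mp (hle ha)
    exact Submodule.smul_mem_smul (Ideal.mem_span_singleton_self x)
      ((Ideal.IsPrime.mem_or_mem ‹_› ha).resolve_left hxp)
  · rwa [Ideal.span_singleton_le_iff_mem, Ideal.jacobson_bot]

variable [IsNoetherianRing R]

lemma ringKrullDim_le_ringKrullDim_quotient_span_singleton_add_one {x : R}
    (hx : x ∈ Ring.jacobson R) : ringKrullDim R ≤ ringKrullDim (R ⧸ Ideal.span {x}) + 1 := by
  simpa using ringKrullDim_le_ringKrullDim_quotient_add_encard {x} (Set.singleton_subset_iff.mpr hx)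

lemma ringKrullDim_quotient_le_ringKrullDim_quotient_sup_span_singleton_add_one {x : R}
    (hx : x ∈ Ring.jacobson R) (I : Ideal R) :
    ringKrullDim (R ⧸ I) ≤ ringKrullDim (R ⧸ I ⊔ Ideal.span {x}) + 1 := by
  have hmem : Ideal.Quotient.mk I x ∈ Ring.jacobson (R ⧸ I) :=
    Ring.map_jacobson_le (Ideal.Quotient.mk I) (Submodule.mem_map_of_mem hx)
  rw [← ringKrullDim_eq_of_ringEquiv (DoubleQuot.quotQuotEquivQuotSup I (Ideal.span {x})),
    Ideal.map_span, Set.image_singleton]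
  exact ringKrullDim_le_ringKrullDim_quotient_span_singleton_add_one hmem

/- A prime `p` with `dim R ⧸ p = dim R` lies in `(x)` because the domain `R ⧸ (x)` has no proper
quotient of the same dimension; as `p` misses `x`, it equals `x p` and vanishes by Nakayama. -/
lemma isDomain_of_isDomain_quotient_span_singleton {x : R} (hx : x ∈ Ring.jacobson R)
    [IsDomain (R ⧸ Ideal.span {x})] {n : ℕ} (hn : ringKrullDim (R ⧸ Ideal.span {x}) ≤ n)
    (hdim : n + 1 ≤ ringKrullDim R) : IsDomain R := by
  obtain ⟨p, hp, hdimp⟩ := exists_isPrime_le_ringKrullDim_quotient (n := n + 1) (mod_cast hdim)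
  rw [Nat.cast_add_one] at hdimp
  have hle : p ≤ Ideal.span {x} := by
    have hsup : n ≤ ringKrullDim (R ⧸ p ⊔ Ideal.span {x}) :=
      ENat.WithBot.add_le_add_one_right_iff.mp <| hdimp.trans <|
        ringKrullDim_quotient_le_ringKrullDim_quotient_sup_span_singleton_add_one hx p
    have hinj := injective_of_surjective_of_ringKrullDim_le (Ideal.Quotient.factor_surjective
      (le_sup_right : Ideal.span {x} ≤ p ⊔ Ideal.span {x})) hn hsup
    rw [RingHom.injective_iff_ker_eq_bot, Ideal.Quotient.factor_ker, Ideal.map_eq_bot_iff_le_ker,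
      Ideal.mk_ker] at hinj
    exact le_sup_left.trans hinj
  have hxp : x ∉ p := fun hxp ↦ by
    have hsurj := Ideal.Quotient.factor_surjective ((Ideal.span_singleton_le_iff_mem p).mpr hxp)
    exact (ENat.WithBot.add_one_le_iff.mp hdimp).not_ge
      ((ringKrullDim_le_of_surjective _ hsurj).trans hn)
  obtain rfl := eq_bot_of_isPrime_of_le_span_singleton hx (IsNoetherian.noetherian p) hle hxp
  exact IsDomain.of_bot_isPrime R

lemma ringKrullDim_le_length_of_ofList_eq_maximalIdeal [IsLocalRing R] {rs : List R}
    (h : Ideal.ofList rs = IsLocalRing.maximalIdeal R) : ringKrullDim R ≤ rs.length := by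
  classical
  have hrs : Ideal.ofList rs = Ideal.span (rs.toFinset : Set R) := by simp [Ideal.ofList]
  refine (ringKrullDim_le_spanFinrank_maximalIdeal R).trans (Nat.cast_le.mpr ?_)
  rw [← h, hrs]
  refine (Submodule.spanFinrank_span_le_ncard_of_finite rs.toFinset.finite_toSet).trans ?_
  rw [Set.ncard_coe_finset]
  exact rs.toFinset_card_le

end KrullDimension

/-- A regular system of parameters of a local ring `R`, i.e. `dim R` generators of the maximal
ideal. A Noetherian local ring is regular exactly when it has one. The generators form a list and
not a set because the order matters for regular sequences. -/
structure IsRegularSystemOfParameters {R : Type*} [CommRing R] [IsLocalRing R] (rs : List R) :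
    Prop where
  ofList_eq : Ideal.ofList rs = IsLocalRing.maximalIdeal R
  length_eq : (rs.length : WithBot ℕ∞) = ringKrullDim R

namespace IsRegularSystemOfParameters

open IsLocalRing

section

variable {R : Type*} [CommRing R] [IsLocalRing R] {x : R} {rs : List R}

lemma mem_maximalIdeal (h : IsRegularSystemOfParameters rs) (hx : x ∈ rs) : x ∈ maximalIdeal R :=
  h.ofList_eq ▸ Ideal.subset_span hx

lemma mem_jacobson (h : IsRegularSystemOfParameters rs) (hx : x ∈ rs) : x ∈ Ring.jacobson R :=
  ringJacobson_eq_maximalIdeal (R := R) ▸ h.mem_maximalIdeal hx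

lemma finset_toList {s : Finset R} (hspan : Ideal.span (s : Set R) = maximalIdeal R)
    (hcard : (s.card : WithBot ℕ∞) = ringKrullDim R) : IsRegularSystemOfParameters s.toList where
  ofList_eq := by simpa [Ideal.ofList] using hspan
  length_eq := by rwa [Finset.length_toList]

lemma isLocalRing_quotient (h : IsRegularSystemOfParameters (x :: rs)) :
    IsLocalRing (R ⧸ Ideal.span {x}) := by
  have : Nontrivial (R ⧸ Ideal.span {x}) := Ideal.Quotient.nontrivial_iff.mpr <|
    Ideal.span_singleton_eq_top.not.mpr (h.mem_maximalIdeal List.mem_cons_self)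
  exact .of_surjective' _ Ideal.Quotient.mk_surjective

end

variable {R : Type*} [CommRing R] [IsLocalRing R] [IsNoetherianRing R] {x : R} {rs : List R}

lemma of_ofList_eq_of_length_le (hrs : Ideal.ofList rs = maximalIdeal R)
    (hlength : rs.length ≤ ringKrullDim R) : IsRegularSystemOfParameters rs :=
  ⟨hrs, hlength.antisymm (ringKrullDim_le_length_of_ofList_eq_maximalIdeal hrs)⟩

lemma quotient (h : IsRegularSystemOfParameters (x :: rs)) [IsLocalRing (R ⧸ Ideal.span {x})] :
    IsRegularSystemOfParameters (rs.map (Ideal.Quotient.mk (Ideal.span {x}))) := by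
  refine of_ofList_eq_of_length_le ?_ ?_
  · rw [← map_maximalIdeal_of_surjective _ (Ideal.Quotient.mk_surjective (I := Ideal.span {x})),
      ← h.ofList_eq, Ideal.ofList_cons, Ideal.map_sup, Ideal.map_quotient_self, bot_sup_eq,
      Ideal.map_ofList]
  · rw [List.length_map, ← ENat.WithBot.add_le_add_one_right_iff, ← Nat.cast_add_one,
      ← List.length_cons (a := x), h.length_eq]
    exact ringKrullDim_le_ringKrullDim_quotient_span_singleton_add_one
      (h.mem_jacobson List.mem_cons_self)

lemma isDomain (h : IsRegularSystemOfParameters rs) : IsDomain R := by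
  induction hn : rs.length generalizing R with
  | zero =>
    obtain rfl := List.length_eq_zero_iff.mp hn
    have : (⊥ : Ideal R).IsPrime := by
      rw [← Ideal.ofList_nil, h.ofList_eq]
      infer_instance
    exact IsDomain.of_bot_isPrime R
  | succ n ih =>
    obtain ⟨x, rs, rfl⟩ := List.exists_cons_of_length_eq_add_one hn
    have := h.isLocalRing_quotient
    have hlength : (rs.map (Ideal.Quotient.mk (Ideal.span {x}))).length = n := by simpa using hn
    have := ih h.quotient hlength
    refine isDomain_of_isDomain_quotient_span_singleton (h.mem_jacobson List.mem_cons_self)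
      (h.quotient.length_eq.symm.trans (by rw [hlength])).le ?_
    rw [← h.length_eq, hn, Nat.cast_add_one]

lemma ne_zero (h : IsRegularSystemOfParameters (x :: rs)) : x ≠ 0 := by
  rintro rfl
  have hle := ringKrullDim_le_length_of_ofList_eq_maximalIdeal (R := R) (rs := rs)
    (by simpa using h.ofList_eq)
  rw [← h.length_eq, Nat.cast_le, List.length_cons] at hle
  exact Nat.not_succ_le_self _ hle

theorem isRegular (h : IsRegularSystemOfParameters rs) : RingTheory.Sequence.IsRegular R rs := by
  induction hn : rs.length generalizing R with
  | zero =>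
    obtain rfl := List.length_eq_zero_iff.mp hn
    exact .nil R R
  | succ n ih =>
    obtain ⟨x, rs, rfl⟩ := List.exists_cons_of_length_eq_add_one hn
    have := h.isLocalRing_quotient
    have := h.isDomain
    exact isRegular_cons_iff_quotient.mpr
      ⟨.of_ne_zero h.ne_zero, ih h.quotient (by simpa using hn)⟩

end IsRegularSystemOfParameters

theorem stmt8_general {R : Type u} [CommRing R] [IsNoetherianRing R] [IsLocalRing R] [Small.{v} R]
    (M N : ModuleCat.{v} R) [Nontrivial M] (hM : IsFiniteLength R M) [Module.Finite R N] {d : ℕ}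
    (hdim : Module.supportDim R N = d) {rs : List R} (hlength : rs.length = d)
    (hrs : RingTheory.Sequence.IsRegular N rs) :
    Nontrivial (((Ext R (ModuleCat.{v} R) d).obj (Opposite.op M)).obj N) := by
  by_contra hext
  rw [not_nontrivial_iff_subsingleton] at hext
  subst hlength
  obtain ⟨hnoeth, -⟩ := isFiniteLength_iff_isNoetherian_isArtinian.mp hM
  have := hrs.nontrivial
  have hN : IsLocalRing.maximalIdeal R • (⊤ : Submodule R N) < ⊤ :=
    (Submodule.top_ne_ideal_smul_of_le_jacobson_annihilator
      (IsLocalRing.maximalIdeal_le_jacobson _)).symm.lt_top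
  obtain ⟨rs', hlength', hrs'⟩ := exists_isRegular_length_add_one_of_subsingleton_ext
    (support_eq_zeroLocus_maximalIdeal_of_isFiniteLength hM) hN
    (fun _ ↦ mem_maximalIdeal_of_isRegular hrs) hrs
    (subsingleton_abelianExt_of_isZero_ext (A := R) M N _ (ModuleCat.isZero_of_subsingleton _))
  have hle := length_le_supportDim_of_isRegular hrs'
  rw [hdim, hlength', Nat.cast_le] at hle
  exact Nat.not_succ_le_self _ hle

/-- Let `(R, 𝔪)` be a regular Noetherian local ring of Krull dimension `d` (regularity
being expressed by the condition that the maximal ideal `𝔪` is generated by `d`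
elements), and let `M` be a nonzero finitely generated `R`-module of finite length.
Then `Ext^d_R(M, R) ≠ 0`. -/
theorem stmt8 (R : Type) [CommRing R] [IsNoetherianRing R] [IsLocalRing R] (d : ℕ)
    (hdim : ringKrullDim R = d)
    (hreg : ∃ s : Finset R, s.card = d ∧
      Ideal.span (s : Set R) = IsLocalRing.maximalIdeal R)
    (M : Type) [AddCommGroup M] [Module R M] [Module.Finite R M]
    (hM : Nontrivial M) (hlen : IsFiniteLength R M) :
    Nontrivial ((((Ext R (ModuleCat.{0} R) d).obj
      (Opposite.op (ModuleCat.of R M))).obj (ModuleCat.of R R)) : Type) := by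
  obtain ⟨s, rfl, hspan⟩ := hreg
  exact stmt8_general (ModuleCat.of R M) (ModuleCat.of R R) hlen
    ((Module.supportDim_self_eq_ringKrullDim R).trans hdim) s.length_toList
      (IsRegularSystemOfParameters.finset_toList hspan hdim.symm).isRegular
end
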